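/- (Theorem 2.3: no spurious local minima; global optimality is detected by local optimality of the collapsed point.) Let p be a real polynomial in D variables of total degree at most d, let L = 2, and consider the objective f(μ) = Σ_{|n|≤d} p_n Σ_{l=1}^2 ∏_{i=1}^D μ_{i,n_i}^{(l)} on the feasible set F_2 ⊆ ℝ^{(2d+1)×D×2}. Let μ = ((μ_1^{(1)}, …, μ_D^{(1)}), (μ_1^{(2)}, …, μ_D^{(2)})) ∈ F_2 and set α^{(l)} = ∏_{i=1}^D μ_{i,0}^{(l)}. Then f(μ) ≤ f(ν) for all ν ∈ F_2 (i.e., μ is a global minimum of f on F_2) if and only if for every l ∈ {1,2} with α^{(l)} ≠ 0, the point ν^{(l)} := ((μ_1^{(l)}/α^{(l)}, μ_2^{(l)}, …, μ_D^{(l)}), (0, …, 0)) is a local minimum of f on F_2, i.e., there is a neighborhood U of ν^{(l)} in ℝ^{(2d+1)×D×2} such that f(ν^{(l)}) ≤ f(ρ) for all ρ ∈ U ∩ F_2. -/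

import Mathlib

open MeasureTheory

/-- The degree-`d` moment matrix `𝓜_d(μ)` of a vector `μ ∈ ℝ^{2d+1}`,
with entries `μ (m+n)`. -/
noncomputable def momentMatrix (d : ℕ) (μ : Fin (2*d+1) → ℝ) :
    Matrix (Fin (d+1)) (Fin (d+1)) ℝ :=
  fun m n => μ ⟨m.1 + n.1, by have hm := m.isLt; have hn := n.isLt; omega⟩

/-- The localized moment matrix `𝓜_{d-1}(μ; 1 - x²)` of a vector `μ ∈ ℝ^{2d+1}`,
with entries `μ (m+n) - μ (m+n+2)`. -/
noncomputable def locMomentMatrix (d : ℕ) (μ : Fin (2*d+1) → ℝ) :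
    Matrix (Fin d) (Fin d) ℝ :=
  fun m n =>
    μ ⟨m.1 + n.1, by have hm := m.isLt; have hn := n.isLt; omega⟩ -
      μ ⟨m.1 + n.1 + 2, by have hm := m.isLt; have hn := n.isLt; omega⟩

/-- Entry `k` of a vector `μ ∈ ℝ^{2d+1}`, indexed by a natural number (`0` out of
range). -/
noncomputable def entry (d : ℕ) (μ : Fin (2*d+1) → ℝ) (k : ℕ) : ℝ :=
  if h : k < 2*d+1 then μ ⟨k, h⟩ else 0

/-- The feasible set `F₂ ⊆ ℝ^{(2d+1) × D × 2}`: all moment matrices are PSD and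
`Σ_l ∏_i μ_{i,0}^{(l)} = 1`. -/
def Feasible (D d : ℕ) (μ : Fin 2 → Fin D → Fin (2*d+1) → ℝ) : Prop :=
  (∀ l i, (momentMatrix d (μ l i)).PosSemidef) ∧
  (∀ l i, (locMomentMatrix d (μ l i)).PosSemidef) ∧
  (∑ l, ∏ i, entry d (μ l i) 0) = 1

/-- The reformulated objective `f(μ) = Σ_n p_n Σ_l ∏_i μ_{i,n_i}^{(l)}`. -/
noncomputable def objective (D d : ℕ) (p : MvPolynomial (Fin D) ℝ)
    (μ : Fin 2 → Fin D → Fin (2*d+1) → ℝ) : ℝ :=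
  ∑ n ∈ p.support, p.coeff n * ∑ l, ∏ i, entry d (μ l i) (n i)

/-- The collapsed point `((μ₁^{(l)}/α, μ₂^{(l)}, …, μ_D^{(l)}), (0, …, 0))`. -/
noncomputable def collapse (D d : ℕ) (μ : Fin 2 → Fin D → Fin (2*d+1) → ℝ)
    (l : Fin 2) (α : ℝ) : Fin 2 → Fin D → Fin (2*d+1) → ℝ :=
  fun l' i k => if l'.1 = 0 then (if i.1 = 0 then μ l i k / α else μ l i k) else 0

/-!
Since the constraint and the objective are sums over `l` of functions homogeneous of degree `D`,
both are governed by the *value per unit mass* of a single product term: `μ` is a global minimum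
iff no product term has value per unit mass below `f(μ)`, which forces every term of `μ` carrying
mass to attain `f(μ)` exactly. Terms without mass contribute nothing: the localized moment matrix
makes the even moments decreasing, so a vanishing moment of order zero annihilates the trace of
the moment matrix, hence the matrix itself.

At a collapsed point the second term is zero, so an arbitrary product term `y` can be switched on
there as `s • y`, at the cost of rescaling the first term by `1 - s ^ D * mass y`. The objective is
affine in `s ^ D` along this path, so a local minimum already bounds the value per unit mass of
every `y`.
-/

open Filter Topology

lemma isLocalMinOn_iff_exists_mem_nhds {X β : Type*} [TopologicalSpace X] [Preorder β]
    {f : X → β} {s : Set X} {a : X} :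
    IsLocalMinOn f s a ↔ ∃ U ∈ 𝓝 a, ∀ x ∈ U, x ∈ s → f a ≤ f x :=
  eventually_nhdsWithin_iff.trans eventually_iff_exists_mem

section Moments

variable {d : ℕ} {v : Fin (2 * d + 1) → ℝ}

lemma entry_smul (c : ℝ) (v : Fin (2 * d + 1) → ℝ) (k : ℕ) :
    entry d (c • v) k = c * entry d v k := by
  unfold entry
  split_ifs <;> simp

lemma momentMatrix_apply (v : Fin (2 * d + 1) → ℝ) (m n : Fin (d + 1)) :
    momentMatrix d v m n = entry d v (m + n) := by
  rw [momentMatrix, entry, dif_pos]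

lemma locMomentMatrix_apply (v : Fin (2 * d + 1) → ℝ) (m n : Fin d) :
    locMomentMatrix d v m n = entry d v (m + n) - entry d v (m + n + 2) := by
  simp only [locMomentMatrix, entry]
  rw [dif_pos, dif_pos]

lemma momentMatrix_smul (c : ℝ) (v : Fin (2 * d + 1) → ℝ) :
    momentMatrix d (c • v) = c • momentMatrix d v :=
  rfl

lemma locMomentMatrix_smul (c : ℝ) (v : Fin (2 * d + 1) → ℝ) :
    locMomentMatrix d (c • v) = c • locMomentMatrix d v := by
  ext m n
  simp [locMomentMatrix, mul_sub]

/-- The semidefinite relaxation of being the vector of moments of degree at most `2 * d` of a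
positive measure on `[-1, 1]`. -/
structure IsPseudoMoment (d : ℕ) (v : Fin (2 * d + 1) → ℝ) : Prop where
  posSemidef_momentMatrix : (momentMatrix d v).PosSemidef
  posSemidef_locMomentMatrix : (locMomentMatrix d v).PosSemidef

namespace IsPseudoMoment

lemma smul (hv : IsPseudoMoment d v) {c : ℝ} (hc : 0 ≤ c) : IsPseudoMoment d (c • v) where
  posSemidef_momentMatrix := by
    simpa only [momentMatrix_smul] using hv.posSemidef_momentMatrix.smul hc
  posSemidef_locMomentMatrix := by
    simpa only [locMomentMatrix_smul] using hv.posSemidef_locMomentMatrix.smul hc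

lemma entry_add_self_nonneg (hv : IsPseudoMoment d v) {k : ℕ} (hk : k ≤ d) :
    0 ≤ entry d v (k + k) := by
  simpa only [momentMatrix_apply] using
    hv.posSemidef_momentMatrix.diag_nonneg (i := ⟨k, Nat.lt_succ_of_le hk⟩)

lemma entry_zero_nonneg (hv : IsPseudoMoment d v) : 0 ≤ entry d v 0 :=
  hv.entry_add_self_nonneg d.zero_le

lemma entry_add_self_add_two_le (hv : IsPseudoMoment d v) {k : ℕ} (hk : k < d) :
    entry d v (k + k + 2) ≤ entry d v (k + k) := by
  simpa only [locMomentMatrix_apply, sub_nonneg] using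
    hv.posSemidef_locMomentMatrix.diag_nonneg (i := ⟨k, hk⟩)

lemma entry_add_self_le_entry_zero (hv : IsPseudoMoment d v) {k : ℕ} (hk : k ≤ d) :
    entry d v (k + k) ≤ entry d v 0 := by
  induction k with
  | zero => exact le_rfl
  | succ k ih =>
    rw [show k + 1 + (k + 1) = k + k + 2 by omega]
    exact (hv.entry_add_self_add_two_le hk).trans (ih (Nat.le_of_succ_le hk))

lemma momentMatrix_eq_zero (hv : IsPseudoMoment d v) (h0 : entry d v 0 = 0) :
    momentMatrix d v = 0 := by
  refine hv.posSemidef_momentMatrix.trace_eq_zero_iff.1 (Finset.sum_eq_zero fun k _ ↦ ?_)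
  have hk : (k : ℕ) ≤ d := Nat.le_of_lt_succ k.2
  rw [Matrix.diag_apply, momentMatrix_apply]
  exact le_antisymm (h0 ▸ hv.entry_add_self_le_entry_zero hk) (hv.entry_add_self_nonneg hk)

lemma entry_eq_zero (hv : IsPseudoMoment d v) (h0 : entry d v 0 = 0) {k : ℕ} (hk : k ≤ 2 * d) :
    entry d v k = 0 := by
  have h := momentMatrix_apply v ⟨k / 2, by omega⟩ ⟨k - k / 2, by omega⟩
  rw [hv.momentMatrix_eq_zero h0, Matrix.zero_apply] at h
  rw [h]
  congr 1
  change k = k / 2 + (k - k / 2)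
  omega

end IsPseudoMoment

end Moments

section ProductTerms

variable {ι : Type*} [Fintype ι] {d : ℕ} {p : MvPolynomial ι ℝ} {x : ι → Fin (2 * d + 1) → ℝ}

/-- The mass `∏ i, x_{i,0}` of a product term, which is the total mass of the product measure when
each `x i` is the moment vector of a measure. -/
noncomputable def termMass (d : ℕ) (x : ι → Fin (2 * d + 1) → ℝ) : ℝ :=
  ∏ i, entry d (x i) 0

/-- The contribution `∑ n, p_n ∏ i, x_{i,n_i}` of a product term to the objective, which is the
integral of `p` against the product measure when each `x i` is the moment vector of a measure. -/
noncomputable def termValue (d : ℕ) (p : MvPolynomial ι ℝ) (x : ι → Fin (2 * d + 1) → ℝ) : ℝ :=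
  ∑ n ∈ p.support, p.coeff n * ∏ i, entry d (x i) (n i)

lemma prod_entry_smul (c : ι → ℝ) (x : ι → Fin (2 * d + 1) → ℝ) (n : ι → ℕ) :
    ∏ i, entry d ((c • x) i) (n i) = (∏ i, c i) * ∏ i, entry d (x i) (n i) := by
  simp only [Pi.smul_apply', entry_smul, Finset.prod_mul_distrib]

lemma termMass_smul (c : ι → ℝ) (x : ι → Fin (2 * d + 1) → ℝ) :
    termMass d (c • x) = (∏ i, c i) * termMass d x :=
  prod_entry_smul c x 0

lemma termValue_smul (p : MvPolynomial ι ℝ) (c : ι → ℝ) (x : ι → Fin (2 * d + 1) → ℝ) :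
    termValue d p (c • x) = (∏ i, c i) * termValue d p x := by
  simp only [termValue, prod_entry_smul, Finset.mul_sum, mul_left_comm]

lemma termMass_nonneg (hx : ∀ i, IsPseudoMoment d (x i)) : 0 ≤ termMass d x :=
  Finset.prod_nonneg fun i _ ↦ (hx i).entry_zero_nonneg

lemma termValue_eq_zero_of_termMass_eq_zero (hp : ∀ i, p.degreeOf i ≤ 2 * d)
    (hx : ∀ i, IsPseudoMoment d (x i)) (h : termMass d x = 0) : termValue d p x = 0 := by
  obtain ⟨i, -, hi⟩ := Finset.prod_eq_zero_iff.1 h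
  refine Finset.sum_eq_zero fun n hn ↦ mul_eq_zero_of_right _ ?_
  have hni : n i ≤ 2 * d := (MvPolynomial.monomial_le_degreeOf i hn).trans (hp i)
  exact Finset.prod_eq_zero (Finset.mem_univ i) ((hx i).entry_eq_zero hi hni)

/-- The number `c` bounds from below the value per unit mass of every product of pseudo-moment
vectors; stated without division, so that terms of mass zero are covered as well. -/
def IsUnitMassLowerBound (d : ℕ) (p : MvPolynomial ι ℝ) (c : ℝ) : Prop :=
  ∀ x : ι → Fin (2 * d + 1) → ℝ, (∀ i, IsPseudoMoment d (x i)) → c * termMass d x ≤ termValue d p x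

end ProductTerms

section Objective

variable {D d : ℕ} {p : MvPolynomial (Fin D) ℝ} {μ : Fin 2 → Fin D → Fin (2 * d + 1) → ℝ}
  {x y : Fin D → Fin (2 * d + 1) → ℝ}

lemma feasible_iff :
    Feasible D d μ ↔ (∀ l i, IsPseudoMoment d (μ l i)) ∧ ∑ l, termMass d (μ l) = 1 :=
  ⟨fun h ↦ ⟨fun l i ↦ ⟨h.1 l i, h.2.1 l i⟩, h.2.2⟩,
    fun h ↦ ⟨fun l i ↦ (h.1 l i).1, fun l i ↦ (h.1 l i).2, h.2⟩⟩

lemma objective_eq_sum_termValue (p : MvPolynomial (Fin D) ℝ)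
    (μ : Fin 2 → Fin D → Fin (2 * d + 1) → ℝ) :
    objective D d p μ = ∑ l, termValue d p (μ l) := by
  simp only [objective, termValue, Finset.mul_sum]
  exact Finset.sum_comm

lemma Feasible.sum_mul_termMass (hμ : Feasible D d μ) (c : ℝ) : ∑ l, c * termMass d (μ l) = c := by
  rw [← Finset.mul_sum, (feasible_iff.1 hμ).2, mul_one]

lemma IsUnitMassLowerBound.le_objective {c : ℝ} (hc : IsUnitMassLowerBound d p c)
    (hμ : Feasible D d μ) : c ≤ objective D d p μ :=
  calc
    c = ∑ l, c * termMass d (μ l) := (hμ.sum_mul_termMass c).symm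
    _ ≤ ∑ l, termValue d p (μ l) :=
      Finset.sum_le_sum fun l _ ↦ hc (μ l) ((feasible_iff.1 hμ).1 l)
    _ = objective D d p μ := (objective_eq_sum_termValue p μ).symm

lemma IsUnitMassLowerBound.termValue_eq_objective_mul_termMass (hμ : Feasible D d μ)
    (hc : IsUnitMassLowerBound d p (objective D d p μ)) (l : Fin 2) :
    termValue d p (μ l) = objective D d p μ * termMass d (μ l) := by
  have hle (k : Fin 2) (_ : k ∈ Finset.univ) :
      objective D d p μ * termMass d (μ k) ≤ termValue d p (μ k) :=
    hc (μ k) ((feasible_iff.1 hμ).1 k)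
  have hsum : ∑ k, objective D d p μ * termMass d (μ k) = ∑ k, termValue d p (μ k) := by
    rw [hμ.sum_mul_termMass, objective_eq_sum_termValue]
  exact ((Finset.sum_eq_sum_iff_of_le hle).1 hsum l (Finset.mem_univ l)).symm

lemma collapse_one (μ : Fin 2 → Fin D → Fin (2 * d + 1) → ℝ) (l : Fin 2) (α : ℝ) :
    collapse D d μ l α 1 = 0 := by
  ext
  simp [collapse]

variable [NeZero D]

/-- The point whose first term is `x`, rescaled in its first factor by `t`, and whose second term is
`s • y`. Taking `s = 0` gives the collapsed points, and `t = 1 - s ^ D * termMass d y` their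
feasible perturbations in the direction of `y`. -/
noncomputable def twoTermPoint (t s : ℝ) (x y : Fin D → Fin (2 * d + 1) → ℝ) :
    Fin 2 → Fin D → Fin (2 * d + 1) → ℝ :=
  ![(Pi.mulSingle 0 t : Fin D → ℝ) • x, (fun _ : Fin D ↦ s) • y]

lemma sum_termMass_twoTermPoint (t s : ℝ) (x y : Fin D → Fin (2 * d + 1) → ℝ) :
    ∑ l, termMass d (twoTermPoint t s x y l) = t * termMass d x + s ^ D * termMass d y := by
  simp [twoTermPoint, termMass_smul]

lemma objective_twoTermPoint (p : MvPolynomial (Fin D) ℝ) (t s : ℝ)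
    (x y : Fin D → Fin (2 * d + 1) → ℝ) :
    objective D d p (twoTermPoint t s x y) = t * termValue d p x + s ^ D * termValue d p y := by
  simp [objective_eq_sum_termValue, twoTermPoint, termValue_smul]

lemma feasible_twoTermPoint (hx : ∀ i, IsPseudoMoment d (x i)) (hy : ∀ i, IsPseudoMoment d (y i))
    {t s : ℝ} (ht : 0 ≤ t) (hs : 0 ≤ s) (h : t * termMass d x + s ^ D * termMass d y = 1) :
    Feasible D d (twoTermPoint t s x y) := by
  have ht' (i : Fin D) : 0 ≤ (Pi.mulSingle 0 t : Fin D → ℝ) i := by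
    rw [Pi.mulSingle_apply]
    split_ifs
    exacts [ht, zero_le_one]
  refine feasible_iff.2 ⟨Fin.forall_fin_two.2 ⟨fun i ↦ (hx i).smul (ht' i),
    fun i ↦ (hy i).smul hs⟩, ?_⟩
  rw [sum_termMass_twoTermPoint, h]

lemma continuous_twoTermPoint (x y : Fin D → Fin (2 * d + 1) → ℝ) :
    Continuous fun z : ℝ × ℝ ↦ twoTermPoint z.1 z.2 x y := by
  have hfst : Continuous fun z : ℝ × ℝ ↦ (Pi.mulSingle 0 z.1 : Fin D → ℝ) :=
    (continuous_mulSingle 0).comp continuous_fst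
  refine continuous_pi (Fin.forall_fin_two.2 ⟨?_, ?_⟩)
  · exact continuous_pi fun i ↦ ((continuous_apply i).comp hfst).smul continuous_const
  · exact continuous_pi fun _ ↦ continuous_snd.smul continuous_const

lemma collapse_eq_twoTermPoint (μ : Fin 2 → Fin D → Fin (2 * d + 1) → ℝ) (l : Fin 2) (α : ℝ)
    (y : Fin D → Fin (2 * d + 1) → ℝ) :
    collapse D d μ l α = twoTermPoint α⁻¹ 0 (μ l) y := by
  refine funext (Fin.forall_fin_two.2 ⟨?_, ?_⟩)
  · ext i k
    by_cases hi : i = 0 <;> simp [collapse, twoTermPoint, hi, div_eq_inv_mul]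
  · ext i k
    simp [collapse, twoTermPoint]

lemma twoTermPoint_one_zero (hμ : μ 1 = 0) (y : Fin D → Fin (2 * d + 1) → ℝ) :
    twoTermPoint 1 0 (μ 0) y = μ := by
  refine funext (Fin.forall_fin_two.2 ⟨?_, ?_⟩)
  · ext
    simp [twoTermPoint]
  · ext
    simp [twoTermPoint, hμ]

lemma objective_collapse (p : MvPolynomial (Fin D) ℝ) (μ : Fin 2 → Fin D → Fin (2 * d + 1) → ℝ)
    (l : Fin 2) (α : ℝ) : objective D d p (collapse D d μ l α) = α⁻¹ * termValue d p (μ l) := by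
  rw [collapse_eq_twoTermPoint μ l α 0, objective_twoTermPoint, zero_pow (NeZero.ne D), zero_mul,
    add_zero]

lemma feasible_collapse {l : Fin 2} (hμ : ∀ i, IsPseudoMoment d (μ l i))
    (hl : termMass d (μ l) ≠ 0) : Feasible D d (collapse D d μ l (termMass d (μ l))) := by
  rw [collapse_eq_twoTermPoint μ l _ (μ l)]
  refine feasible_twoTermPoint hμ hμ (inv_nonneg.2 (termMass_nonneg hμ)) le_rfl ?_
  rw [inv_mul_cancel₀ hl, zero_pow (NeZero.ne D), zero_mul, add_zero]

lemma isUnitMassLowerBound_iff_forall_feasible (hp : ∀ i, p.degreeOf i ≤ 2 * d) {c : ℝ} :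
    IsUnitMassLowerBound d p c ↔ ∀ ρ, Feasible D d ρ → c ≤ objective D d p ρ := by
  refine ⟨fun hc ρ ↦ hc.le_objective, fun h x hx ↦ ?_⟩
  obtain hx0 | hx0 := (termMass_nonneg hx).eq_or_lt
  · rw [← hx0, termValue_eq_zero_of_termMass_eq_zero hp hx hx0.symm, mul_zero]
  · have hc := h _ (feasible_collapse (μ := fun _ ↦ x) (l := 0) hx hx0.ne')
    rwa [objective_collapse, le_inv_mul_iff₀ hx0, mul_comm] at hc

lemma objective_eq_termValue_of_eq_zero (p : MvPolynomial (Fin D) ℝ) (hμ1 : μ 1 = 0) :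
    objective D d p μ = termValue d p (μ 0) := by
  have h := objective_twoTermPoint p 1 0 (μ 0) 0
  rwa [twoTermPoint_one_zero hμ1, one_mul, zero_pow (NeZero.ne D), zero_mul, add_zero] at h

lemma Feasible.termMass_eq_one (hμ : Feasible D d μ) (hμ1 : μ 1 = 0) : termMass d (μ 0) = 1 := by
  have h := sum_termMass_twoTermPoint 1 0 (μ 0) 0
  rwa [twoTermPoint_one_zero hμ1, (feasible_iff.1 hμ).2, one_mul, zero_pow (NeZero.ne D), zero_mul,
    add_zero, eq_comm] at h

lemma Feasible.tendsto_twoTermPoint (hμ : Feasible D d μ) (hμ1 : μ 1 = 0)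
    (hy : ∀ i, IsPseudoMoment d (y i)) :
    Tendsto (fun s ↦ twoTermPoint (1 - s ^ D * termMass d y) s (μ 0) y) (𝓝[>] 0)
      (𝓝[{ρ | Feasible D d ρ}] μ) := by
  have hcont : Continuous fun s : ℝ ↦ 1 - s ^ D * termMass d y := by fun_prop
  refine tendsto_nhdsWithin_iff.2 ⟨?_, ?_⟩
  · have hlim := ((continuous_twoTermPoint (μ 0) y).comp (hcont.prodMk continuous_id)).tendsto 0
    simp only [Function.comp_apply, id, zero_pow (NeZero.ne D), zero_mul, sub_zero,
      twoTermPoint_one_zero hμ1] at hlim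
    exact hlim.mono_left nhdsWithin_le_nhds
  · have hpos : ∀ᶠ s in 𝓝[>] 0, 0 < 1 - s ^ D * termMass d y :=
      ((hcont.tendsto 0).mono_left nhdsWithin_le_nhds).eventually_const_lt
        (by simp [NeZero.ne D])
    filter_upwards [hpos, self_mem_nhdsWithin] with s hs hs0
    refine feasible_twoTermPoint ((feasible_iff.1 hμ).1 0) hy hs.le (le_of_lt hs0) ?_
    rw [hμ.termMass_eq_one hμ1, mul_one, sub_add_cancel]

lemma isUnitMassLowerBound_of_isLocalMinOn (hμ : Feasible D d μ) (hμ1 : μ 1 = 0)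
    (hmin : IsLocalMinOn (objective D d p) {ρ | Feasible D d ρ} μ) :
    IsUnitMassLowerBound d p (objective D d p μ) := by
  intro y hy
  have hle := (hμ.tendsto_twoTermPoint hμ1 hy).eventually hmin
  obtain ⟨s, hs, hs0⟩ := (hle.and self_mem_nhdsWithin).exists
  rw [objective_twoTermPoint, ← objective_eq_termValue_of_eq_zero p hμ1] at hs
  refine le_of_mul_le_mul_left ?_ (pow_pos hs0 D)
  linarith

end Objective

theorem statement12_general {D d : ℕ} [NeZero D] {p : MvPolynomial (Fin D) ℝ}
    (hp : ∀ i, p.degreeOf i ≤ 2 * d) {μ : Fin 2 → Fin D → Fin (2 * d + 1) → ℝ}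
    (hμ : Feasible D d μ) :
    IsMinOn (objective D d p) {ρ | Feasible D d ρ} μ ↔
      ∀ l, termMass d (μ l) ≠ 0 →
        IsLocalMinOn (objective D d p) {ρ | Feasible D d ρ}
          (collapse D d μ l (termMass d (μ l))) := by
  have hpm := (feasible_iff.1 hμ).1
  constructor
  · intro hmin l hl
    have hc := (isUnitMassLowerBound_iff_forall_feasible hp).2 (isMinOn_iff.1 hmin)
    have heq : objective D d p (collapse D d μ l (termMass d (μ l))) = objective D d p μ := by
      rw [objective_collapse, hc.termValue_eq_objective_mul_termMass hμ, mul_comm,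
        mul_inv_cancel_right₀ hl]
    exact IsMinOn.localize fun ρ hρ ↦ heq.trans_le (hmin hρ)
  · intro hloc ρ hρ
    have hterm (l : Fin 2) : termValue d p (μ l) ≤ objective D d p ρ * termMass d (μ l) := by
      obtain hl | hl := (termMass_nonneg (hpm l)).eq_or_lt
      · rw [← hl, termValue_eq_zero_of_termMass_eq_zero hp (hpm l) hl.symm, mul_zero]
      · have hc := isUnitMassLowerBound_of_isLocalMinOn (feasible_collapse (hpm l) hl.ne')
          (collapse_one μ l _) (hloc l hl.ne')
        have hle := hc.le_objective hρ
        rwa [objective_collapse, inv_mul_le_iff₀ hl, mul_comm] at hle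
    calc
      objective D d p μ = ∑ l, termValue d p (μ l) := objective_eq_sum_termValue p μ
      _ ≤ ∑ l, objective D d p ρ * termMass d (μ l) := Finset.sum_le_sum fun l _ ↦ hterm l
      _ = objective D d p ρ := hμ.sum_mul_termMass _

/-- Theorem 2.3 (no spurious local minima): a feasible point `μ ∈ F₂` is a global
minimum of the reformulated objective if and only if, for every `l` with
`α⁽ˡ⁾ = ∏_i μ_{i,0}^{(l)} ≠ 0`, the collapsed point
`((μ₁^{(l)}/α⁽ˡ⁾, μ₂^{(l)}, …, μ_D^{(l)}), (0, …, 0))` is a local minimum of the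
objective on `F₂`. -/
theorem statement12 (D d : ℕ) (hD : 1 ≤ D) (hd : 1 ≤ d)
    (p : MvPolynomial (Fin D) ℝ) (hdeg : p.totalDegree ≤ d)
    (μ : Fin 2 → Fin D → Fin (2*d+1) → ℝ) (hμ : Feasible D d μ) :
    (∀ ρ : Fin 2 → Fin D → Fin (2*d+1) → ℝ, Feasible D d ρ →
        objective D d p μ ≤ objective D d p ρ) ↔
    (∀ l : Fin 2, (∏ i, entry d (μ l i) 0) ≠ 0 →
      ∃ U ∈ nhds (collapse D d μ l (∏ i, entry d (μ l i) 0)),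
        ∀ ρ ∈ U, Feasible D d ρ →
          objective D d p (collapse D d μ l (∏ i, entry d (μ l i) 0)) ≤
            objective D d p ρ) := by
  have : NeZero D := ⟨Nat.one_le_iff_ne_zero.1 hD⟩
  simpa only [isMinOn_iff, isLocalMinOn_iff_exists_mem_nhds, Set.mem_ofPred_eq, termMass] using
    statement12_general (fun i ↦ (p.degreeOf_le_totalDegree i).trans (by omega)) hμ
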